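/- arXiv:1610.03375 — 5 statements merged into one kernel-verified Lean document; each statement's English description precedes it below -/
import Mathlib

section
/- Let p ≥ 3, let λ₁, λ₂ be real numbers with 0 < |λ₁| < 1 and 0 < |λ₂| < 1, and let z ∈ ℝ^(p−2) be a vector with 0 < |z_k| < 1 for all k. Let A be the diagonal matrix with entries 1 − z_k², and let Σ_ZZ = z zᵀ + A. Set K = zᵀ Σ_ZZ⁻¹ z. Then the partial correlation ρ = (λ₁λ₂ − λ₁λ₂ K) / (√(1 − λ₁² K) · √(1 − λ₂² K)) satisfies |ρ| < |λ₁λ₂|; that is, in a unidimensional factor model the partial correlation between two indicators given all other indicators is strictly closer to zero than the zero-order correlation between the two indicators. -/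
open Matrix

/-! With `w k = z k / (1 - z k ^ 2)` and `S = z ⬝ᵥ w > 0`, the matrix `Σ = z zᵀ + A` satisfies
`Σ w = (1 + S) z`. As `Σ` is positive definite, hence invertible, this gives `K = S / (1 + S)`, so
`0 < K < 1` (`schur_factor_mem_Ioo`). Since `lᵢ ^ 2 < 1`, both radicands `1 - lᵢ ^ 2 K` exceed
`1 - K > 0`, hence the product of their square roots exceeds `1 - K`, and
`ρ = l₁ l₂ (1 - K) / (√(1 - l₁ ^ 2 K) √(1 - l₂ ^ 2 K))` is a strict shrinkage of `l₁ l₂`. -/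

/-- The share of the common factor's variance explained by the indicators with loadings `z` lies
strictly between `0` and `1`. -/
lemma schur_factor_mem_Ioo {n : Type*} [Fintype n] [DecidableEq n] [Nonempty n] (z : n → ℝ)
    (hz : ∀ k, 0 < |z k| ∧ |z k| < 1) :
    z ⬝ᵥ ((vecMulVec z z + diagonal (fun k => 1 - z k ^ 2))⁻¹ *ᵥ z) ∈ Set.Ioo (0 : ℝ) 1 := by
  have hpos : ∀ k, 0 < 1 - z k ^ 2 := fun k => by
    have := (sq_lt_one_iff_abs_lt_one (z k)).2 (hz k).2
    linarith
  set M := vecMulVec z z + diagonal (fun k => 1 - z k ^ 2) with hM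
  have hMpd : M.PosDef := by
    have h1 : (vecMulVec z z).PosSemidef := by
      simpa using posSemidef_vecMulVec_self_star z
    exact PosDef.posSemidef_add h1 (PosDef.diagonal hpos)
  set w : n → ℝ := fun k => z k / (1 - z k ^ 2) with hw
  have hS : 0 < z ⬝ᵥ w := by
    refine Finset.sum_pos (fun k _ => ?_) Finset.univ_nonempty
    have h : z k * w k = z k ^ 2 / (1 - z k ^ 2) := by simp only [hw]; ring
    rw [h]
    exact div_pos (sq_pos_of_ne_zero (abs_pos.1 (hz k).1)) (hpos k)
  have hMw : M *ᵥ w = (1 + z ⬝ᵥ w) • z := by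
    ext k
    have h : (1 - z k ^ 2) * w k = z k := mul_div_cancel₀ _ (hpos k).ne'
    simp only [hM, add_mulVec, vecMulVec_mulVec, mulVec_diagonal, Pi.add_apply, Pi.smul_apply,
      smul_eq_mul, MulOpposite.smul_eq_mul_unop, MulOpposite.unop_op, h]
    ring
  have hinv : w = (1 + z ⬝ᵥ w) • (M⁻¹ *ᵥ z) := by
    have hdet : IsUnit M.det := (isUnit_iff_isUnit_det M).1 hMpd.isUnit
    rw [← mulVec_smul, ← hMw, mulVec_mulVec, nonsing_inv_mul _ hdet, one_mulVec]
  have hK : z ⬝ᵥ w = (1 + z ⬝ᵥ w) * (z ⬝ᵥ (M⁻¹ *ᵥ z)) := by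
    conv_lhs => rw [hinv, dotProduct_smul, smul_eq_mul]
  constructor <;> nlinarith

/-- In a unidimensional factor model with `p ≥ 3` indicators, the partial correlation
between two indicators (with loadings `l₁, l₂`) given all other indicators (with
loadings `z`) is strictly closer to zero than the zero-order correlation `l₁ * l₂`. -/
theorem partial_correlation_weaker_than_zero_order
    (p : ℕ) (hp : 3 ≤ p) (l₁ l₂ : ℝ)
    (hl₁ : 0 < |l₁|) (hl₁' : |l₁| < 1) (hl₂ : 0 < |l₂|) (hl₂' : |l₂| < 1)
    (z : Fin (p - 2) → ℝ) (hz : ∀ k, 0 < |z k| ∧ |z k| < 1)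
    (A : Matrix (Fin (p - 2)) (Fin (p - 2)) ℝ)
    (hA : A = Matrix.diagonal (fun k => 1 - (z k) ^ 2))
    (SZZ : Matrix (Fin (p - 2)) (Fin (p - 2)) ℝ)
    (hSZZ : SZZ = vecMulVec z z + A)
    (K : ℝ) (hK : K = z ⬝ᵥ (SZZ⁻¹ *ᵥ z))
    (ρ : ℝ)
    (hρ : ρ = (l₁ * l₂ - l₁ * l₂ * K) /
      (Real.sqrt (1 - l₁ ^ 2 * K) * Real.sqrt (1 - l₂ ^ 2 * K))) :
    |ρ| < |l₁ * l₂| := by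
  have : Nonempty (Fin (p - 2)) := ⟨⟨0, by omega⟩⟩
  obtain ⟨hK0, hK1⟩ : K ∈ Set.Ioo (0 : ℝ) 1 := by
    rw [hK, hSZZ, hA]
    exact schur_factor_mem_Ioo z hz
  have key : ∀ l : ℝ, |l| < 1 → 1 - K < 1 - l ^ 2 * K := fun l hl => by
    have := (sq_lt_one_iff_abs_lt_one l).2 hl
    nlinarith
  have h1 := Real.sqrt_lt_sqrt (sub_nonneg.2 hK1.le) (key l₁ hl₁')
  have h2 := Real.sqrt_lt_sqrt (sub_nonneg.2 hK1.le) (key l₂ hl₂')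
  have hs := Real.mul_self_sqrt (sub_nonneg.2 hK1.le)
  have hD : 1 - K < Real.sqrt (1 - l₁ ^ 2 * K) * Real.sqrt (1 - l₂ ^ 2 * K) :=
    hs ▸ mul_lt_mul'' h1 h2 (Real.sqrt_nonneg _) (Real.sqrt_nonneg _)
  have hDpos := (sub_pos.2 hK1).trans hD
  have hll : 0 < |l₁ * l₂| := by
    rw [abs_mul]
    exact mul_pos hl₁ hl₂
  rw [hρ, abs_div, abs_of_pos hDpos, div_lt_iff₀ hDpos, ← mul_one_sub, abs_mul,
    abs_of_pos (sub_pos.2 hK1)]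
  exact mul_lt_mul_of_pos_left hD hll
end

section
/- Let λ₁, λ₂ be real numbers with 0 < |λ₁| < 1, 0 < |λ₂| < 1 and λ₁λ₂ > 0, and let K be any real number with 0 < K < 1. Then (λ₁λ₂ − λ₁λ₂ K) / (√(1 − λ₁² K) · √(1 − λ₂² K)) < λ₁λ₂; that is, when the zero-order correlation is positive, the partial correlation is strictly smaller than the zero-order correlation. -/
/-- When the zero-order correlation `l₁ * l₂` is positive, the partial correlation
`(l₁l₂ − l₁l₂K)/(√(1 − l₁²K)·√(1 − l₂²K))` is strictly smaller than `l₁ * l₂`,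
for any `K` strictly between 0 and 1. -/
theorem partial_correlation_lt_of_pos
    (l₁ l₂ K : ℝ)
    (hl₁ : 0 < |l₁|) (hl₁' : |l₁| < 1) (hl₂ : 0 < |l₂|) (hl₂' : |l₂| < 1)
    (hpos : 0 < l₁ * l₂) (hK₀ : 0 < K) (hK₁ : K < 1) :
    (l₁ * l₂ - l₁ * l₂ * K) /
      (Real.sqrt (1 - l₁ ^ 2 * K) * Real.sqrt (1 - l₂ ^ 2 * K)) < l₁ * l₂ := by
  have h_sqrt : ∀ l : ℝ, |l| < 1 → √(1 - K) < √(1 - l ^ 2 * K) := fun l hl =>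
    Real.sqrt_lt_sqrt (by linarith) (by nlinarith [(sq_lt_one_iff_abs_lt_one l).mpr hl])
  have h₁ := h_sqrt l₁ hl₁'
  have h₂ := h_sqrt l₂ hl₂'
  have h₀ : 0 < √(1 - K) := Real.sqrt_pos.mpr (by linarith)
  -- Both factors of the denominator exceed `√(1 - K)`, so their product exceeds `1 - K`.
  have hden : 1 - K < √(1 - l₁ ^ 2 * K) * √(1 - l₂ ^ 2 * K) := by
    rw [← Real.mul_self_sqrt (show 0 ≤ 1 - K by linarith)]
    exact mul_lt_mul'' h₁ h₂ h₀.le h₀.le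
  rw [div_lt_iff₀ (by linarith), ← mul_one_sub]
  exact mul_lt_mul_of_pos_left hden hpos
end

section
/- Let λ₁, λ₂ be real numbers with 0 < |λ₁| < 1, 0 < |λ₂| < 1 and λ₁λ₂ < 0, and let K be any real number with 0 < K < 1. Then (λ₁λ₂ − λ₁λ₂ K) / (√(1 − λ₁² K) · √(1 − λ₂² K)) > λ₁λ₂; that is, when the zero-order correlation is negative, the partial correlation is strictly larger than the zero-order correlation. -/
/-- When the zero-order correlation `l₁ * l₂` is negative, the partial correlation
`(l₁l₂ − l₁l₂K)/(√(1 − l₁²K)·√(1 − l₂²K))` is strictly larger than `l₁ * l₂`,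
for any `K` strictly between 0 and 1. -/
theorem partial_correlation_gt_of_neg
    (l₁ l₂ K : ℝ)
    (hl₁ : 0 < |l₁|) (hl₁' : |l₁| < 1) (hl₂ : 0 < |l₂|) (hl₂' : |l₂| < 1)
    (hneg : l₁ * l₂ < 0) (hK₀ : 0 < K) (hK₁ : K < 1) :
    (l₁ * l₂ - l₁ * l₂ * K) /
      (Real.sqrt (1 - l₁ ^ 2 * K) * Real.sqrt (1 - l₂ ^ 2 * K)) > l₁ * l₂ := by
  have hK : 0 < 1 - K := sub_pos.mpr hK₁
  -- Each factor of the denominator exceeds `√(1 - K)`, so their product `D` exceeds `1 - K`;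
  -- multiplying `1 - K < D` by the negative number `l₁ * l₂` gives the claim.
  have key : ∀ l : ℝ, |l| < 1 → √(1 - K) < √(1 - l ^ 2 * K) := fun l hl => by
    have hsq : l ^ 2 < 1 := (sq_lt_one_iff_abs_lt_one l).mpr hl
    exact Real.sqrt_lt_sqrt hK.le (by nlinarith)
  have hD : 1 - K < √(1 - l₁ ^ 2 * K) * √(1 - l₂ ^ 2 * K) := by
    calc 1 - K = √(1 - K) * √(1 - K) := (Real.mul_self_sqrt hK.le).symm
      _ < _ := mul_lt_mul'' (key l₁ hl₁') (key l₂ hl₂') (Real.sqrt_nonneg _) (Real.sqrt_nonneg _)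
  rw [gt_iff_lt, lt_div_iff₀ (hK.trans hD)]
  linarith [mul_lt_mul_of_neg_left hD hneg]
end

section
/- Let λ₁, λ₂, λ_z be real numbers with 0 < |λ₁| < 1, 0 < |λ₂| < 1, 0 < |λ_z| < 1. Then the partial correlation ρ₁₂·z = (λ₁λ₂ − (λ₁λ_z)(λ₂λ_z)) / (√(1 − λ₁²λ_z²) · √(1 − λ₂²λ_z²)) = λ₁λ₂(1 − λ_z²) / (√(1 − λ₁²λ_z²)√(1 − λ₂²λ_z²)) satisfies |ρ₁₂·z| < |λ₁λ₂|. -/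
/-!
The numerator factors as `l₁ * l₂ * (1 - lz ^ 2)`, so the claim amounts to `1 - lz ^ 2` being
smaller than the denominator. Since `l₁ ^ 2, l₂ ^ 2 < 1` and `lz ≠ 0`, each radicand
`1 - lᵢ ^ 2 * lz ^ 2` exceeds `1 - lz ^ 2 > 0`, and the two strict inequalities between square
roots multiply.
-/

/-- Three-indicator case: for loadings `l₁, l₂, lz` with `0 < |l| < 1`, the partial
correlation of the first two indicators given the third is strictly closer to zero
than their zero-order correlation `l₁ * l₂`. -/
theorem partial_correlation_three_variables
    (l₁ l₂ lz : ℝ)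
    (hl₁ : 0 < |l₁|) (hl₁' : |l₁| < 1)
    (hl₂ : 0 < |l₂|) (hl₂' : |l₂| < 1)
    (hlz : 0 < |lz|) (hlz' : |lz| < 1) :
    (l₁ * l₂ - (l₁ * lz) * (l₂ * lz)) /
        (Real.sqrt (1 - l₁ ^ 2 * lz ^ 2) * Real.sqrt (1 - l₂ ^ 2 * lz ^ 2)) =
      l₁ * l₂ * (1 - lz ^ 2) /
        (Real.sqrt (1 - l₁ ^ 2 * lz ^ 2) * Real.sqrt (1 - l₂ ^ 2 * lz ^ 2)) ∧
    |(l₁ * l₂ - (l₁ * lz) * (l₂ * lz)) /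
        (Real.sqrt (1 - l₁ ^ 2 * lz ^ 2) * Real.sqrt (1 - l₂ ^ 2 * lz ^ 2))| <
      |l₁ * l₂| := by
  have e : l₁ * l₂ - (l₁ * lz) * (l₂ * lz) = l₁ * l₂ * (1 - lz ^ 2) := by ring
  have h₁ : l₁ ^ 2 < 1 := (sq_lt_one_iff_abs_lt_one l₁).2 hl₁'
  have h₂ : l₂ ^ 2 < 1 := (sq_lt_one_iff_abs_lt_one l₂).2 hl₂'
  have hz : lz ^ 2 < 1 := (sq_lt_one_iff_abs_lt_one lz).2 hlz'
  have hz0 : 0 < lz ^ 2 := sq_pos_of_ne_zero (abs_pos.1 hlz)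
  have hs : 0 < 1 - lz ^ 2 := by linarith
  have r₁ : Real.sqrt (1 - lz ^ 2) < Real.sqrt (1 - l₁ ^ 2 * lz ^ 2) :=
    Real.sqrt_lt_sqrt hs.le (by nlinarith)
  have r₂ : Real.sqrt (1 - lz ^ 2) < Real.sqrt (1 - l₂ ^ 2 * lz ^ 2) :=
    Real.sqrt_lt_sqrt hs.le (by nlinarith)
  -- Both factors of the denominator exceed `√(1 - lz ^ 2)`, so it exceeds `1 - lz ^ 2`.
  have key : 1 - lz ^ 2 <
      Real.sqrt (1 - l₁ ^ 2 * lz ^ 2) * Real.sqrt (1 - l₂ ^ 2 * lz ^ 2) := by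
    calc 1 - lz ^ 2 = Real.sqrt (1 - lz ^ 2) * Real.sqrt (1 - lz ^ 2) :=
          (Real.mul_self_sqrt hs.le).symm
      _ < _ := mul_lt_mul'' r₁ r₂ (Real.sqrt_nonneg _) (Real.sqrt_nonneg _)
  have hD := hs.trans key
  refine ⟨by rw [e], ?_⟩
  rw [e, abs_div, abs_mul (l₁ * l₂), abs_of_pos hs, abs_of_pos hD, div_lt_iff₀ hD]
  exact mul_lt_mul_of_pos_left key (by rw [abs_mul]; exact mul_pos hl₁ hl₂)
end

section
/- Let p ≥ 3, let λ ∈ ℝ^p with 0 < |λ_k| < 1 for all k, let Θ = diag(1 − λ_k²), and let Σ = λλᵀ + Θ. Then Σ is positive definite, and with P = Σ⁻¹, for every pair of distinct indices i ≠ j the quantity ρ_ij := −P_ij / √(P_ii P_jj) satisfies |ρ_ij| < |Σ_ij| = |λ_i λ_j|. -/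
/-!
Write `tₖ = 1 - lₖ²`, `wₖ = lₖ² / tₖ` and `D = 1 + ∑ₖ wₖ`. By the Sherman–Morrison formula
(`inv_factor_cov`) the precision matrix is `P = diag(1/t) - D⁻¹ (l/t)(l/t)ᵀ`. Hence, for `i ≠ j`,
`|P i j| = |lᵢ lⱼ| c` with `c = 1 / (tᵢ tⱼ D)`, while `P i i = (D - wᵢ) / (tᵢ D)`.
A third indicator contributes a positive term to `D`, so `D - wᵢ > 1 + wⱼ = 1 / tⱼ`, that is,
`P i i > c`; symmetrically `P j j > c`. Therefore `√(P i i * P j j) > c`, which is the claim.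
-/

open Matrix

/-- The Sherman–Morrison inverse of a one-factor covariance matrix. -/
lemma inv_factor_cov {p : ℕ} (l t : Fin p → ℝ) (ht : ∀ k, 0 < t k) (D : ℝ)
    (hD : D = 1 + ∑ k, l k ^ 2 / t k) :
    (vecMulVec l l + diagonal t)⁻¹ =
      diagonal (fun k => 1 / t k) -
        vecMulVec (fun k => l k / t k) (fun k => l k / t k / D) := by
  have hD0 : 0 < D := by
    have : 0 ≤ ∑ k, l k ^ 2 / t k :=
      Finset.sum_nonneg fun k _ => div_nonneg (sq_nonneg _) (ht k).le
    linarith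
  apply Matrix.inv_eq_right_inv
  have hdot : l ⬝ᵥ (fun k => l k / t k) = D - 1 := by
    rw [hD, add_sub_cancel_left, dotProduct]
    exact Finset.sum_congr rfl fun k _ => by ring
  rw [add_mul, mul_sub, mul_sub, Matrix.vecMulVec_mul_vecMulVec, hdot,
    Matrix.diagonal_mul_diagonal]
  ext i j
  have hi := (ht i).ne'
  have hj := (ht j).ne'
  simp only [Matrix.add_apply, Matrix.sub_apply, Matrix.mul_diagonal, Matrix.diagonal_mul,
    vecMulVec_apply, Pi.smul_apply, smul_eq_mul]
  by_cases hij : i = j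
  · subst hij
    simp only [diagonal_apply_eq, one_apply_eq]
    field_simp
    ring
  · simp only [diagonal_apply_ne _ hij, one_apply_ne hij]
    field_simp
    ring

/-- With a third indicator present, each diagonal entry of the precision matrix exceeds the factor
`1 / (tᵢ tⱼ D)` by which the off-diagonal entry `P i j` differs from `-lᵢ lⱼ`. -/
lemma lt_precision_diag {x t s D : ℝ} (ht : 0 < t) (hs : 0 < s) (hD : 0 < D)
    (h : 1 / s + x ^ 2 / t < D) :
    1 / (t * s * D) < 1 / t - x / t * (x / t / D) := by
  have e : 1 / t - x / t * (x / t / D) - 1 / (t * s * D)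
      = (D - (1 / s + x ^ 2 / t)) / (t * D) := by
    field_simp
    ring
  have : 0 < (D - (1 / s + x ^ 2 / t)) / (t * D) := div_pos (by linarith) (by positivity)
  linarith

/-- For a unidimensional factor model `Σ = λλᵀ + diag(1 − λₖ²)` with `p ≥ 3` indicators
and loadings `0 < |λₖ| < 1`, the matrix `Σ` is positive definite, and with precision
matrix `P = Σ⁻¹`, the partial correlation `−P_ij/√(P_ii P_jj)` between any two distinct
indicators is strictly closer to zero than the zero-order correlation `Σ_ij = λᵢλⱼ`. -/
theorem precision_partial_correlation_weaker
    (p : ℕ) (hp : 3 ≤ p) (l : Fin p → ℝ)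
    (hl : ∀ k, 0 < |l k| ∧ |l k| < 1)
    (S : Matrix (Fin p) (Fin p) ℝ)
    (hS : S = vecMulVec l l + Matrix.diagonal (fun k => 1 - (l k) ^ 2))
    (P : Matrix (Fin p) (Fin p) ℝ) (hP : P = S⁻¹) :
    S.PosDef ∧
      ∀ i j, i ≠ j →
        S i j = l i * l j ∧
        |(-(P i j) / Real.sqrt (P i i * P j j))| < |l i * l j| := by
  have ht : ∀ k, 0 < 1 - l k ^ 2 := fun k => by
    have := (sq_lt_one_iff_abs_lt_one (l k)).2 (hl k).2
    linarith
  refine ⟨?_, fun i j hij => ⟨?_, ?_⟩⟩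
  · rw [hS]
    refine Matrix.PosDef.posSemidef_add ?_ (Matrix.PosDef.diagonal ht)
    simpa using Matrix.posSemidef_vecMulVec_self_star l
  · simp [hS, vecMulVec_apply, hij]
  set D : ℝ := 1 + ∑ k, l k ^ 2 / (1 - l k ^ 2) with hD
  rw [hP, hS, inv_factor_cov l _ ht D hD]
  have hw : ∀ k, 0 < l k ^ 2 / (1 - l k ^ 2) := fun k =>
    div_pos (sq_pos_of_ne_zero (abs_pos.1 (hl k).1)) (ht k)
  have hlt : 1 + l i ^ 2 / (1 - l i ^ 2) + l j ^ 2 / (1 - l j ^ 2) < D := by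
    obtain ⟨k, -, hk⟩ := Finset.exists_mem_notMem_of_card_lt_card
      (s := ({i, j} : Finset (Fin p))) (t := Finset.univ) (by
        rw [Finset.card_pair hij, Finset.card_univ, Fintype.card_fin]
        omega)
    have := Finset.sum_lt_sum_of_subset (Finset.subset_univ ({i, j} : Finset (Fin p)))
      (Finset.mem_univ k) hk (hw k) (fun m _ _ => (hw m).le)
    rw [Finset.sum_pair hij] at this
    linarith
  have hone : ∀ k, 1 / (1 - l k ^ 2) = 1 + l k ^ 2 / (1 - l k ^ 2) := fun k => by
    have := (ht k).ne'
    field_simp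
    ring
  have hti := ht i
  have htj := ht j
  have hD0 : 0 < D := by linarith [hw i, hw j]
  have hi := lt_precision_diag (x := l i) hti htj hD0 (by linarith [hone j])
  have hj := lt_precision_diag (x := l j) htj hti hD0 (by linarith [hone i])
  rw [mul_comm (1 - l j ^ 2) (1 - l i ^ 2)] at hj
  simp only [Matrix.sub_apply, vecMulVec_apply, diagonal_apply_eq, diagonal_apply_ne _ hij]
  set c : ℝ := 1 / ((1 - l i ^ 2) * (1 - l j ^ 2) * D) with hc
  have hc0 : 0 < c := by positivity
  have hoff : -(0 - l i / (1 - l i ^ 2) * (l j / (1 - l j ^ 2) / D)) = l i * l j * c := by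
    rw [hc]
    field_simp
    ring
  have hsqrt : c < √((1 / (1 - l i ^ 2) - l i / (1 - l i ^ 2) * (l i / (1 - l i ^ 2) / D)) *
      (1 / (1 - l j ^ 2) - l j / (1 - l j ^ 2) * (l j / (1 - l j ^ 2) / D))) := by
    rw [Real.lt_sqrt hc0.le, sq]
    exact mul_lt_mul'' hi hj hc0.le hc0.le
  rw [hoff, abs_div, abs_mul _ c, abs_of_pos hc0, abs_of_pos (hc0.trans hsqrt),
    div_lt_iff₀ (hc0.trans hsqrt)]
  refine mul_lt_mul_of_pos_left hsqrt ?_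
  rw [abs_mul]
  exact mul_pos (hl i).1 (hl j).1
end
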